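/- arXiv:1411.3534 — 2 statements merged into one kernel-verified Lean document; each statement's English description precedes it below -/
import Mathlib

section
/- Let m, n, λ be positive integers with m ≤ n and let r ≥ 0. Then f_r(m,n,λ)/r! = (1/Λ_{m,n}) · Σ_{(a_1,…,a_m) ∈ ℕ^m, a_1+⋯+a_m = r} [ ∏_{k=1}^{m} λ^{(a_k)}/a_k! ] · ∫_{[0,∞)^m} Δ(q)² ∏_{k=1}^{m} q_k^{n−m+a_k} e^{−q_k} dq. (This is the coefficient of x^r in the paper's integral representation F(m,n,λ;x) = (1/Λ_{mn}) ∫ Δ²(q_1,…,q_m) ∏_k e^{−q_k} q_k^{n−m} [Σ_{a≥0} (Γ(λ+a)/(a!Γ(λ))) q_k^a x^a] dq_k.) -/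
open Finset MeasureTheory

/-- Number of cycles of a permutation, counting fixed points as cycles of length 1. -/
def cyc {r : ℕ} (σ : Equiv.Perm (Fin r)) : ℕ :=
  σ.cycleType.card + (Finset.univ.filter fun x => σ x = x).card

/-- `f_r(m,n,λ) = Σ_{(σ,τ) ∈ S_r × S_r} m^{cyc σ} n^{cyc τ} λ^{cyc((στ)⁻¹)}`,
summed over all pairs; for `r = 0` this sum is `1`. -/
def fSum (r m n lam : ℕ) : ℕ :=
  ∑ σ : Equiv.Perm (Fin r), ∑ τ : Equiv.Perm (Fin r),
    m ^ cyc σ * n ^ cyc τ * lam ^ cyc (σ * τ)⁻¹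

/-- The Vandermonde determinant `Δ(q) = ∏_{i<j} (q_j - q_i)`. -/
def vandermonde {m : ℕ} (q : Fin m → ℝ) : ℝ :=
  ∏ p ∈ Finset.univ.filter (fun p : Fin m × Fin m => p.1 < p.2), (q p.2 - q p.1)

/-- The positive orthant `[0,∞)^m`. -/
def orthant (m : ℕ) : Set (Fin m → ℝ) := {q | ∀ k, 0 ≤ q k}

/-- `Λ_{m,n} = ∫_{[0,∞)^m} Δ(q)² ∏_k q_k^{n-m} e^{-q_k} dq`. -/
noncomputable def Lam (m n : ℕ) : ℝ :=
  ∫ q in orthant m, (vandermonde q) ^ 2 *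
    ∏ k : Fin m, (q k ^ (n - m) * Real.exp (-(q k)))

/-!
A number `k ^ cyc σ` counts the colourings of the points by `k` colours that are constant on the
cycles of `σ`, and the sum of the monomials `∏ x, X (φ x)` over these colourings `φ` is the product
`p_σ` of the power sums indexed by the cycle lengths of `σ`. Adding a point to the ground set
therefore gives a recursion for the factorization sums `∑_{στ = π} m ^ cyc σ * n ^ cyc τ`.
Integration by parts against `Δ(q)² ∏ q_k ^ (n - m) * exp (-q_k)` gives the same recursion for the
moments of `p_π`, so these moments are the factorization sums times `Λ_{m,n}`. It remains to
evaluate the moment of `∑_π λ ^ cyc π * p_π`. The coefficient of a colouring `φ` in this sum is the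
sum of `λ ^ cyc π` over the stabilizer of `φ`, a product of symmetric groups, hence a product of
ascending factorials, and the multinomial theorem counts the colourings with given fibre sizes.
-/

open Equiv (Perm swap optionCongr)

universe u

section PermOption

variable {α : Type*}

theorem optionCongr_mul (σ τ : Perm α) :
    optionCongr (σ * τ) = optionCongr σ * optionCongr τ :=
  Equiv.optionCongr_trans τ σ

variable [DecidableEq α]

theorem optionCongr_mul_swap_none (σ : Perm α) (b : Option α) :
    optionCongr σ * swap none b = swap none (b.map σ) * optionCongr σ :=
  Equiv.mul_swap_eq_swap_mul (optionCongr σ) none b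

theorem swap_none_mul_swap_none_of_ne {x y : α} (h : x ≠ y) :
    swap none (some x) * swap none (some y) =
      swap none (some y) * optionCongr (swap x y) := by
  rw [Equiv.optionCongr_swap, Equiv.swap_mul_eq_mul_swap]
  simp [Equiv.swap_apply_of_ne_of_ne, h, Equiv.swap_comm]

theorem exists_eq_swap_none_mul_optionCongr (π : Perm (Option α)) :
    ∃ b σ, π = swap none b * optionCongr σ :=
  ⟨_, _, (Perm.decomposeOption.symm_apply_apply π).symm⟩

variable [Fintype α] {ι M : Type*} [Fintype ι] [AddCommMonoid M]

theorem sum_perm_option (f : Perm (Option α) → M) :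
    ∑ π, f π = ∑ b : Option α, ∑ σ : Perm α, f (swap none b * optionCongr σ) := by
  rw [← Equiv.sum_comp Perm.decomposeOption.symm, Fintype.sum_prod_type]
  rfl

theorem sum_option_colourings (f : (Option α → ι) → M) :
    ∑ φ, f φ = ∑ ψ : α → ι, ∑ k : ι, f fun x => x.elim k ψ := by
  rw [sum_comm, ← Fintype.sum_prod_type', ← Equiv.sum_comp Equiv.piOptionEquivProd.symm]
  refine sum_congr rfl fun p _ => congrArg f (funext fun x => ?_)
  cases x <;> rfl

end PermOption

section InvariantColourings

variable {α β : Type*} [Fintype α] [DecidableEq α] [Fintype β] [DecidableEq β]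
variable {ι M : Type*} [Fintype ι] [DecidableEq ι] [AddCommMonoid M]

/-- The colourings of `α` by `ι` that are constant on every cycle of `σ`. Counting them gives
`card ι ^ (number of cycles of σ)`, and summing monomials over them gives products of power sums. -/
def invariantColourings (ι : Type*) [Fintype ι] [DecidableEq ι] (σ : Perm α) : Finset (α → ι) :=
  {φ | φ ∘ σ = φ}

theorem mem_invariantColourings {σ : Perm α} {φ : α → ι} :
    φ ∈ invariantColourings ι σ ↔ ∀ x, φ (σ x) = φ x := by
  simp [invariantColourings, funext_iff]

theorem mem_invariantColourings_iff_sameCycle {σ : Perm α} {φ : α → ι} :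
    φ ∈ invariantColourings ι σ ↔ ∀ x y, σ.SameCycle x y → φ x = φ y := by
  rw [mem_invariantColourings]
  refine ⟨?_, fun h x => (h x (σ x) ⟨1, rfl⟩).symm⟩
  rintro h x y hxy
  obtain ⟨i, rfl⟩ := hxy.exists_nat_pow_eq
  induction i with
  | zero => rfl
  | succ i ih => rw [pow_succ', Perm.mul_apply, h, ← ih ⟨i, rfl⟩]

theorem invariantColourings_inv (σ : Perm α) :
    invariantColourings ι σ⁻¹ = invariantColourings ι σ := by
  ext φ
  simp only [mem_invariantColourings_iff_sameCycle, Perm.sameCycle_inv]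

theorem mem_invariantColourings_swap_mul_of_eq {σ : Perm α} {φ : α → ι} {x y : α}
    (h : φ x = φ y) : φ ∈ invariantColourings ι (swap x y * σ) ↔ φ ∈ invariantColourings ι σ := by
  have swap_invariant (z : α) : φ (swap x y z) = φ z := by grind
  simp only [mem_invariantColourings, Perm.mul_apply, swap_invariant]

theorem comp_mem_invariantColourings_iff (e : α ≃ β) {σ : Perm α} {φ : β → ι} :
    φ ∘ e ∈ invariantColourings ι σ ↔ φ ∈ invariantColourings ι (e.permCongr σ) := by
  simp [mem_invariantColourings, e.forall_congr_left]

theorem sum_invariantColourings_permCongr (e : α ≃ β) (σ : Perm α) (f : (α → ι) → M) :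
    ∑ φ ∈ invariantColourings ι (e.permCongr σ), f (φ ∘ e) =
      ∑ φ ∈ invariantColourings ι σ, f φ :=
  sum_equiv (e.symm.arrowCongr (Equiv.refl ι))
    (fun _ => (comp_mem_invariantColourings_iff e).symm) fun _ _ => rfl

theorem card_invariantColourings_of_surjective {γ : Type*} [Fintype γ] {σ : Perm α} {b : α → γ}
    (hb : Function.Surjective b) (hσ : ∀ x y, b x = b y ↔ σ.SameCycle x y) :
    #(invariantColourings ι σ) = Fintype.card ι ^ Fintype.card γ := by
  classical
  rw [← Fintype.card_fun, ← card_univ]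
  symm
  refine card_bij (fun ψ _ => ψ ∘ b) (fun ψ _ => ?_) (fun ψ _ ψ' _ h => ?_) (fun φ hφ => ?_)
  · exact mem_invariantColourings_iff_sameCycle.2 fun x y h => congrArg ψ ((hσ x y).2 h)
  · exact hb.injective_comp_right h
  · refine ⟨φ ∘ Function.surjInv hb, mem_univ _, funext fun x => ?_⟩
    exact mem_invariantColourings_iff_sameCycle.1 hφ _ _
      ((hσ _ _).1 (Function.surjInv_eq hb (b x)))

/-- The cycle of `σ` through a point. Mathlib's `cycleFactorsFinset` leaves out the trivial cycles,
so these are added as the fixed points of `σ`. -/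
def cycleThrough (σ : Perm α) (x : α) : σ.cycleFactorsFinset ⊕ {x // σ x = x} :=
  if h : σ x = x then .inr ⟨x, h⟩
  else .inl ⟨σ.cycleOf x, Perm.cycleOf_mem_cycleFactorsFinset_iff.2 (Perm.mem_support.2 h)⟩

theorem cycleThrough_surjective (σ : Perm α) : Function.Surjective (cycleThrough σ) := by
  rintro (⟨c, hc⟩ | ⟨x, hx⟩)
  · obtain ⟨⟨x, hcx, -⟩, hcσ⟩ := Perm.mem_cycleFactorsFinset_iff.1 hc
    have hx : x ∈ c.support := Perm.mem_support.2 hcx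
    have hσx : σ x ≠ x := hcσ x hx ▸ hcx
    exact ⟨x, by simp [cycleThrough, hσx, Perm.cycle_is_cycleOf hx hc]⟩
  · exact ⟨x, by simp [cycleThrough, hx]⟩

theorem cycleThrough_eq_iff_sameCycle (σ : Perm α) (x y : α) :
    cycleThrough σ x = cycleThrough σ y ↔ σ.SameCycle x y := by
  have fixed_iff (h : σ.SameCycle x y) : σ x = x ↔ σ y = y := h.apply_eq_self_iff
  by_cases hx : σ x = x <;> by_cases hy : σ y = y
  · have eq_iff_sameCycle : x = y ↔ σ.SameCycle x y :=
      ⟨fun h => h ▸ Perm.SameCycle.refl σ x, fun h => h.eq_of_left hx⟩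
    simpa [cycleThrough, hx, hy] using eq_iff_sameCycle
  · simpa [cycleThrough, hx, hy] using fun h => hy ((fixed_iff h).1 hx)
  · simpa [cycleThrough, hx, hy] using fun h => hx ((fixed_iff h).2 hy)
  · simp [cycleThrough, hx, hy, Perm.sameCycle_iff_cycleOf_eq_of_mem_support]

theorem card_invariantColourings_eq_pow_cyc {r : ℕ} (σ : Perm (Fin r)) :
    #(invariantColourings ι σ) = Fintype.card ι ^ cyc σ := by
  have card_cycles : Fintype.card (σ.cycleFactorsFinset ⊕ {x // σ x = x}) = cyc σ := by
    simp [cyc, Perm.cycleType_def, Fintype.card_subtype]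
  rw [← card_cycles]
  exact card_invariantColourings_of_surjective (cycleThrough_surjective σ)
    (cycleThrough_eq_iff_sameCycle σ)

end InvariantColourings

section OptionColourings

variable {α : Type*} [Fintype α] [DecidableEq α]
variable {ι M : Type*} [Fintype ι] [DecidableEq ι] [AddCommMonoid M]

theorem mem_invariantColourings_swap_none_mul_optionCongr {σ : Perm α} {b : Option α}
    {φ : Option α → ι} :
    φ ∈ invariantColourings ι (swap none b * optionCongr σ) ↔
      φ ∘ some ∈ invariantColourings ι σ ∧ φ none = φ b := by
  have mem_optionCongr :
      φ ∈ invariantColourings ι (optionCongr σ) ↔ φ ∘ some ∈ invariantColourings ι σ := by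
    simp [mem_invariantColourings, Option.forall]
  rw [← mem_optionCongr]
  constructor
  · intro h
    have h_none : φ none = φ b := by simpa using (mem_invariantColourings.1 h none).symm
    exact ⟨(mem_invariantColourings_swap_mul_of_eq h_none).1 h, h_none⟩
  · rintro ⟨h, h_none⟩
    exact (mem_invariantColourings_swap_mul_of_eq h_none).2 h

theorem sum_invariantColourings_swap_none_mul_optionCongr (b : Option α) (σ : Perm α)
    (f : (Option α → ι) → M) :
    ∑ φ ∈ invariantColourings ι (swap none b * optionCongr σ), f φ =
      ∑ ψ ∈ invariantColourings ι σ, ∑ k, if k = b.elim k ψ then f fun x => x.elim k ψ else 0 := by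
  calc
    _ = ∑ φ, if φ ∘ some ∈ invariantColourings ι σ then if φ none = φ b then f φ else 0 else 0 := by
      simp only [← ite_and, ← mem_invariantColourings_swap_none_mul_optionCongr, sum_ite_mem,
        univ_inter]
    _ = ∑ ψ, if ψ ∈ invariantColourings ι σ then
          ∑ k, if k = b.elim k ψ then f fun x => x.elim k ψ else 0 else 0 := by
      rw [sum_option_colourings]
      refine sum_congr rfl fun ψ _ => ?_
      split_ifs with hψ
      · exact sum_congr rfl fun k _ => if_pos hψ
      · exact sum_eq_zero fun k _ => if_neg hψ
    _ = _ := by rw [sum_ite_mem, univ_inter]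

theorem sum_invariantColourings_optionCongr (σ : Perm α) (f : (Option α → ι) → M) :
    ∑ φ ∈ invariantColourings ι (optionCongr σ), f φ =
      ∑ ψ ∈ invariantColourings ι σ, ∑ k, f fun x => x.elim k ψ := by
  simpa [← Perm.one_def] using
    sum_invariantColourings_swap_none_mul_optionCongr none σ f

theorem sum_invariantColourings_swap_none_some_mul (y : α) (σ : Perm α)
    (f : (Option α → ι) → M) :
    ∑ φ ∈ invariantColourings ι (swap none (some y) * optionCongr σ), f φ =
      ∑ ψ ∈ invariantColourings ι σ, f fun x => x.elim (ψ y) ψ := by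
  rw [sum_invariantColourings_swap_none_mul_optionCongr]
  exact sum_congr rfl fun ψ _ => Fintype.sum_ite_eq' (ψ y) fun k => f fun x => x.elim k ψ

end OptionColourings

section FactorizationSum

variable {α β : Type*} [Fintype α] [DecidableEq α] [Fintype β] [DecidableEq β]

/-- The number `k ^ (number of cycles of σ)`, defined as a count of invariant colourings so that
it makes sense, and can be computed recursively, over any finite type. -/
def colourCount (k : ℕ) (σ : Perm α) : ℕ := #(invariantColourings (Fin k) σ)

theorem colourCount_eq_pow_cyc {r : ℕ} (k : ℕ) (σ : Perm (Fin r)) :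
    colourCount k σ = k ^ cyc σ := by
  rw [colourCount, card_invariantColourings_eq_pow_cyc, Fintype.card_fin]

theorem colourCount_permCongr (e : α ≃ β) (k : ℕ) (σ : Perm α) :
    colourCount k (e.permCongr σ) = colourCount k σ := by
  simpa only [card_eq_sum_ones, colourCount] using
    sum_invariantColourings_permCongr e σ fun _ : α → Fin k => 1

theorem colourCount_swap_none_mul_optionCongr (k : ℕ) (b : Option α) (σ : Perm α) :
    colourCount k (swap none b * optionCongr σ) = b.elim k (fun _ => 1) * colourCount k σ := by
  simp only [colourCount, card_eq_sum_ones]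
  cases b with
  | none =>
    rw [Equiv.swap_self, ← Perm.one_def, one_mul, sum_invariantColourings_optionCongr]
    simp [mul_comm]
  | some y =>
    rw [sum_invariantColourings_swap_none_some_mul]
    simp

/-- The weighted number `∑_{στ = π} m ^ cyc σ * n ^ cyc τ` of factorizations of `π`. -/
def factorizationSum (m n : ℕ) (π : Perm α) : ℕ :=
  ∑ σ : Perm α, colourCount m σ * colourCount n (σ⁻¹ * π)

theorem factorizationSum_permCongr (e : α ≃ β) (m n : ℕ) (π : Perm α) :
    factorizationSum m n (e.permCongr π) = factorizationSum m n π := by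
  have permCongr_inv_mul (σ : Perm α) :
      (e.permCongr σ)⁻¹ * e.permCongr π = e.permCongr (σ⁻¹ * π) := by
    rw [inv_mul_eq_iff_eq_mul]
    exact (congrArg e.permCongr (mul_inv_cancel_left σ π).symm).trans
      (map_mul e.permCongrHom σ (σ⁻¹ * π))
  simp only [factorizationSum, ← Equiv.sum_comp e.permCongr, permCongr_inv_mul,
    colourCount_permCongr]

theorem sum_colourCount_of_swap_none_mul_eq (m n : ℕ) {b c : Option α} {σ : Perm α}
    {π : Perm (Option α)} (h : swap none b * π = swap none c * optionCongr σ) :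
    ∑ ρ : Perm α, colourCount m (swap none b * optionCongr ρ) *
        colourCount n ((swap none b * optionCongr ρ)⁻¹ * π) =
      b.elim m (fun _ => 1) * c.elim n (fun _ => 1) * factorizationSum m n σ := by
  have cofactor_eq (ρ : Perm α) : (swap none b * optionCongr ρ)⁻¹ * π =
      swap none (c.map ⇑ρ⁻¹) * optionCongr (ρ⁻¹ * σ) := by
    rw [mul_inv_rev, Equiv.swap_inv, mul_assoc, h, ← mul_assoc, optionCongr_mul, ← mul_assoc,
      ← optionCongr_mul_swap_none]
    rfl
  have weight_eq (ρ : Perm α) :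
      (c.map ⇑ρ⁻¹).elim n (fun _ => 1) = c.elim n (fun _ => 1) := by
    cases c <;> rfl
  simp only [factorizationSum, cofactor_eq, colourCount_swap_none_mul_optionCongr, weight_eq,
    mul_sum]
  exact sum_congr rfl fun ρ _ => by ring

theorem factorizationSum_optionCongr (m n : ℕ) (σ : Perm α) :
    factorizationSum m n (optionCongr σ) =
      (m * n + Fintype.card α) * factorizationSum m n σ := by
  rw [factorizationSum, sum_perm_option]
  simp only [sum_colourCount_of_swap_none_mul_eq m n (rfl : swap none _ * optionCongr σ = _)]
  simp [Fintype.sum_option, add_mul]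

theorem factorizationSum_swap_none_mul_optionCongr (m n : ℕ) (y : α) (σ : Perm α) :
    factorizationSum m n (swap none (some y) * optionCongr σ) =
      (m + n) * factorizationSum m n σ +
        ∑ x ∈ univ.erase y, factorizationSum m n (swap x y * σ) := by
  have at_none := sum_colourCount_of_swap_none_mul_eq m n (b := none) (c := some y) (σ := σ)
    (π := swap none (some y) * optionCongr σ) (by simp [← Perm.one_def])
  have at_y := sum_colourCount_of_swap_none_mul_eq m n (b := some y) (c := none) (σ := σ)
    (π := swap none (some y) * optionCongr σ) (by simp [← Perm.one_def])
  have at_ne (x : α) (hx : x ∈ univ.erase y) :=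
    sum_colourCount_of_swap_none_mul_eq m n (b := some x) (c := some y) (σ := swap x y * σ)
      (π := swap none (some y) * optionCongr σ) <| by
        rw [optionCongr_mul, ← mul_assoc, ← mul_assoc,
          swap_none_mul_swap_none_of_ne (ne_of_mem_erase hx)]
  rw [factorizationSum, sum_perm_option, Fintype.sum_option, ← add_sum_erase _ _ (mem_univ y),
    at_none, at_y, sum_congr rfl at_ne]
  simp [add_mul, add_assoc]

end FactorizationSum

section LaguerreFunctional

open MvPolynomial

variable {ι R : Type*} [CommRing R]

/-- The linear functional on polynomials whose value on the monomial with exponents `a` is the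
moment `μ a`. -/
noncomputable def momentFunctional (μ : (ι → ℕ) → R) : MvPolynomial ι R →ₗ[R] R :=
  (basisMonomials ι R).constr R fun a => μ a

theorem momentFunctional_monomial (μ : (ι → ℕ) → R) (a : ι →₀ ℕ) (c : R) :
    momentFunctional μ (monomial a c) = c * μ a := by
  have monomial_eq : monomial a c = c • basisMonomials ι R a := by
    simp [smul_monomial]
  rw [monomial_eq, map_smul, momentFunctional, Module.Basis.constr_basis, smul_eq_mul]

theorem derivation_prod {γ A : Type*} [CommRing A] [Algebra R A] (D : Derivation R A A)
    {s : Finset γ} {f c : γ → A} (h : ∀ i ∈ s, D (f i) = c i * f i) :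
    D (∏ i ∈ s, f i) = (∑ i ∈ s, c i) * ∏ i ∈ s, f i := by
  classical
  induction s using Finset.induction_on with
  | empty => simp
  | insert i s hi ih =>
    rw [prod_insert hi, sum_insert hi, D.leibniz, ih fun j hj => h j (mem_insert_of_mem hj),
      h i (mem_insert_self i s)]
    simp only [smul_eq_mul]
    ring

variable [Fintype ι]

theorem momentFunctional_prod_X_pow (μ : (ι → ℕ) → R) (a : ι → ℕ) :
    momentFunctional μ (∏ k, X k ^ a k) = μ a := by
  have prod_eq : ∏ k, (X k : MvPolynomial ι R) ^ a k =
      monomial (Finsupp.equivFunOnFinite.symm a) 1 := by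
    rw [monomial_eq, C_1, one_mul, Finsupp.prod_fintype _ _ fun _ => pow_zero _]
    rfl
  rw [prod_eq, momentFunctional_monomial, one_mul]
  rfl

theorem mkDerivation_apply_eq_sum (v : ι → MvPolynomial ι R) (f : MvPolynomial ι R) :
    mkDerivation R v f = ∑ k, v k * pderiv k f := by
  classical
  have sum_apply (g : MvPolynomial ι R) :
      (∑ k, v k • pderiv (R := R) k) g = ∑ k, v k * pderiv k g := by
    rw [← Derivation.coeFnAddMonoidHom_apply, map_sum, Finset.sum_apply]
    rfl
  rw [← sum_apply]
  congr 1
  refine derivation_ext fun i => ?_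
  rw [mkDerivation_X, sum_apply]
  simp [pderiv_X, Pi.single_apply]

/-- The functional `f ↦ ∫ f(q) ∏ q_k ^ d * exp (-q_k) dq` over the positive orthant, given by its
moments so that it is available over any commutative ring. -/
noncomputable def laguerreFunctional (d : ℕ) : MvPolynomial ι R →ₗ[R] R :=
  momentFunctional fun a => ∏ k, ((d + a k).factorial : R)

theorem prod_factorial_single_add (d : ℕ) (k : ι) (a : ι →₀ ℕ) :
    ∏ j, (d + (Finsupp.single k 1 + a : ι →₀ ℕ) j).factorial =
      (d + a k + 1) * ∏ j, (d + a j).factorial := by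
  classical
  rw [← mul_prod_erase _ _ (mem_univ k), ← mul_prod_erase univ (fun j => (d + a j).factorial)
    (mem_univ k), ← mul_assoc, ← Nat.factorial_succ]
  congr 1
  · simp [add_comm 1, add_assoc]
  · refine prod_congr rfl fun j hj => ?_
    simp [(ne_of_mem_erase hj).symm]

theorem laguerreFunctional_X_mul (d : ℕ) (k : ι) (g : MvPolynomial ι R) :
    laguerreFunctional d (X k * g) =
      laguerreFunctional d (X k * pderiv k g) + (d + 1) • laguerreFunctional d g := by
  induction g using MvPolynomial.induction_on' with
  | add p q hp hq =>
    simp only [map_add, mul_add, smul_add, hp, hq]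
    abel
  | monomial a c =>
    have X_mul : X k * monomial a c = monomial (Finsupp.single k 1 + a) c := by
      rw [X, monomial_mul, one_mul]
    have euler : X k * pderiv k (monomial a c) = monomial a ((a k : R) * c) := by
      rw [X_mul_pderiv_monomial, ← map_nsmul, nsmul_eq_mul]
    rw [X_mul, euler]
    simp only [laguerreFunctional, momentFunctional_monomial, ← Nat.cast_prod,
      prod_factorial_single_add, nsmul_eq_mul]
    push_cast
    ring

variable [LinearOrder ι]

/-- The Vandermonde determinant `∏_{i<j} (X j - X i)` as a polynomial. -/
noncomputable def vandermondePoly (ι R : Type*) [CommRing R] [Fintype ι] [LinearOrder ι] :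
    MvPolynomial ι R :=
  ∏ p : ι × ι with p.1 < p.2, (X p.2 - X p.1)

theorem sum_lt_add_swap {M : Type*} [AddCommGroup M] (c : ι → ι → M) :
    ∑ p : ι × ι with p.1 < p.2, (c p.1 p.2 + c p.2 p.1) = ∑ i, ∑ j, c i j - ∑ k, c k k := by
  have lower_eq : ∑ p : ι × ι with p.1 < p.2, c p.2 p.1 =
      ∑ p : ι × ι with p.2 < p.1, c p.1 p.2 :=
    sum_equiv (Equiv.prodComm ι ι) (by simp) (by simp)
  have diag_eq : ∑ k, c k k = ∑ p : ι × ι with p.1 = p.2, c p.1 p.2 := by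
    simp [sum_filter, Fintype.sum_prod_type]
  rw [sum_add_distrib, lower_eq, diag_eq, ← Fintype.sum_prod_type', eq_sub_iff_add_eq]
  simp only [sum_filter, ← sum_add_distrib]
  refine sum_congr rfl fun p _ => ?_
  rcases lt_trichotomy p.1 p.2 with h | h | h
  · simp [h, h.ne, h.not_gt]
  · simp [h]
  · simp [h, h.ne', h.not_gt]

variable {v : ι → MvPolynomial ι R} {c : ι → ι → MvPolynomial ι R}

theorem mkDerivation_vandermondePoly_sq (hc : ∀ i j, v i - v j = c i j * (X i - X j)) :
    mkDerivation R v (vandermondePoly ι R ^ 2) =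
      (∑ i, ∑ j, c i j - ∑ k, c k k) * vandermondePoly ι R ^ 2 := by
  have upper : mkDerivation R v (vandermondePoly ι R) =
      (∑ p : ι × ι with p.1 < p.2, c p.1 p.2) * vandermondePoly ι R := by
    refine derivation_prod _ fun p _ => ?_
    simp only [map_sub, mkDerivation_X]
    linear_combination -hc p.1 p.2
  have lower : mkDerivation R v (vandermondePoly ι R) =
      (∑ p : ι × ι with p.1 < p.2, c p.2 p.1) * vandermondePoly ι R := by
    refine derivation_prod _ fun p _ => ?_
    simp only [map_sub, mkDerivation_X, hc p.2 p.1]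
  rw [← sum_lt_add_swap, sum_add_distrib, pow_two, Derivation.leibniz]
  simp only [smul_eq_mul]
  linear_combination vandermondePoly ι R * (upper + lower)

theorem laguerreFunctional_schwingerDyson (d : ℕ) (G : ι → MvPolynomial ι R)
    (hc : ∀ i j, X i * G i - X j * G j = c i j * (X i - X j)) :
    laguerreFunctional d ((∑ k, X k * G k) * vandermondePoly ι R ^ 2) =
      laguerreFunctional d ((∑ k, X k * pderiv k (G k) + (d + 1) • ∑ k, G k +
        (∑ i, ∑ j, c i j - ∑ k, c k k)) * vandermondePoly ι R ^ 2) := by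
  have by_parts (f : MvPolynomial ι R) (k : ι) : laguerreFunctional d (X k * f) =
      laguerreFunctional d (X k * pderiv k f + (d + 1) • f) := by
    rw [laguerreFunctional_X_mul, map_add, map_nsmul]
  rw [add_mul _ _ (vandermondePoly ι R ^ 2), ← mkDerivation_vandermondePoly_sq hc,
    mkDerivation_apply_eq_sum, sum_mul, map_sum]
  simp only [mul_assoc, by_parts, ← map_sum]
  congr 1
  simp only [Derivation.leibniz, smul_eq_mul, nsmul_eq_mul, add_mul, sum_mul, mul_sum,
    ← sum_add_distrib]
  exact sum_congr rfl fun k _ => by ring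

end LaguerreFunctional

section PowerSums

open MvPolynomial

variable {α β ι R : Type*} [Fintype α] [Fintype β] [CommRing R]

/-- The monomial in which each variable occurs as often as its index is used as a colour. -/
noncomputable def colouringMonomial (R : Type*) [CommRing R] (φ : α → ι) : MvPolynomial ι R :=
  ∏ x, X (φ x)

theorem colouringMonomial_comp_equiv (e : α ≃ β) (φ : β → ι) :
    colouringMonomial R (φ ∘ e) = colouringMonomial R φ :=
  e.prod_comp fun x => (X (φ x) : MvPolynomial ι R)

theorem colouringMonomial_option_elim (k : ι) (ψ : α → ι) :
    colouringMonomial R (fun x : Option α => x.elim k ψ) = X k * colouringMonomial R ψ :=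
  Fintype.prod_option _

theorem X_mul_colouringMonomial_eq_update [DecidableEq α] (φ : α → ι) (z : α) (k : ι) :
    X k * colouringMonomial R φ = X (φ z) * colouringMonomial R (Function.update φ z k) := by
  have prod_rest : ∏ x ∈ univ.erase z, (X (Function.update φ z k x) : MvPolynomial ι R) =
      ∏ x ∈ univ.erase z, X (φ x) :=
    prod_congr rfl fun x hx => by rw [Function.update_of_ne (ne_of_mem_erase hx)]
  simp only [colouringMonomial, ← mul_prod_erase univ _ (mem_univ z), Function.update_self,
    prod_rest]
  ring

theorem X_mul_sum_colouringMonomial_eq_of_update [DecidableEq α] {s t : Finset (α → ι)} {k l : ι}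
    (z : α) (hs : ∀ φ ∈ s, φ z = l ∧ Function.update φ z k ∈ t)
    (ht : ∀ φ ∈ t, φ z = k ∧ Function.update φ z l ∈ s) :
    X k * ∑ φ ∈ s, colouringMonomial R φ = X l * ∑ φ ∈ t, colouringMonomial R φ := by
  rw [mul_sum, mul_sum]
  refine sum_bij' (fun φ _ => Function.update φ z k) (fun φ _ => Function.update φ z l)
    (fun φ hφ => (hs φ hφ).2) (fun φ hφ => (ht φ hφ).2) (fun φ hφ => ?_) (fun φ hφ => ?_)
    (fun φ hφ => ?_)
  · simp [← (hs φ hφ).1]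
  · simp [← (ht φ hφ).1]
  · rw [X_mul_colouringMonomial_eq_update φ z k, (hs φ hφ).1]

variable [DecidableEq ι]

/-- The number of points with colour `k`. -/
def fiberCard (φ : α → ι) (k : ι) : ℕ := #{x | φ x = k}

theorem fiberCard_comp_equiv (e : α ≃ β) (φ : β → ι) (k : ι) :
    fiberCard (φ ∘ e) k = fiberCard φ k :=
  card_equiv e (by simp)

theorem fiberCard_option (φ : Option α → ι) (k : ι) :
    fiberCard φ k = (if φ none = k then 1 else 0) + fiberCard (φ ∘ some) k := by
  simp only [fiberCard, card_filter, Fintype.sum_option, Function.comp_apply]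

theorem X_mul_pderiv_colouringMonomial (φ : α → ι) (k : ι) :
    X k * pderiv k (colouringMonomial R φ) = fiberCard φ k • colouringMonomial R φ := by
  have logDeriv (x : α) : ((X k : MvPolynomial ι R) • pderiv (R := R) k) (X (φ x)) =
      (if φ x = k then 1 else 0) * X (φ x) := by
    rw [Derivation.smul_apply, pderiv_X, Pi.single_apply, smul_eq_mul]
    split_ifs with h <;> simp_all
  have euler := derivation_prod (X k • pderiv (R := R) k) (s := univ) fun x _ => logDeriv x
  rw [sum_boole, ← nsmul_eq_mul] at euler
  exact euler

variable [Fintype ι]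

theorem sum_fiberCard (φ : α → ι) : ∑ k, fiberCard φ k = Fintype.card α :=
  (card_eq_sum_card_fiberwise fun x _ => mem_univ (φ x)).symm

variable [DecidableEq α] [DecidableEq β]

/-- The product over the cycles of `σ` of the power sums `∑ k, X k ^ (length of the cycle)`,
expanded into the monomials of the invariant colourings. -/
noncomputable def permPowerSum (ι R : Type*) [Fintype ι] [DecidableEq ι] [CommRing R]
    (σ : Perm α) : MvPolynomial ι R :=
  ∑ φ ∈ invariantColourings ι σ, colouringMonomial R φ

/-- The part of `permPowerSum ι R σ` in which the cycle through `y` has colour `k`. -/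
noncomputable def pinnedPowerSum (R : Type*) [CommRing R] (σ : Perm α) (y : α) (k : ι) :
    MvPolynomial ι R :=
  ∑ φ ∈ invariantColourings ι σ with φ y = k, colouringMonomial R φ

/-- The part of `permPowerSum ι R (swap x y * σ)` in which `x` has colour `k` and `y` has
colour `l`. -/
noncomputable def swapPinnedPowerSum (R : Type*) [CommRing R] (σ : Perm α) (x y : α) (k l : ι) :
    MvPolynomial ι R :=
  ∑ φ ∈ invariantColourings ι (swap x y * σ) with φ x = k ∧ φ y = l, colouringMonomial R φ

theorem permPowerSum_permCongr (e : α ≃ β) (σ : Perm α) :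
    permPowerSum ι R (e.permCongr σ) = permPowerSum ι R σ := by
  simp only [permPowerSum, ← sum_invariantColourings_permCongr e σ, colouringMonomial_comp_equiv]

theorem sum_pinnedPowerSum (σ : Perm α) (y : α) :
    ∑ k : ι, pinnedPowerSum R σ y k = permPowerSum ι R σ :=
  sum_fiberwise _ _ _

theorem sum_swapPinnedPowerSum (σ : Perm α) (x y : α) :
    ∑ k : ι, ∑ l : ι, swapPinnedPowerSum R σ x y k l = permPowerSum ι R (swap x y * σ) := by
  simp only [swapPinnedPowerSum, ← filter_filter, permPowerSum, sum_fiberwise]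

theorem permPowerSum_optionCongr (σ : Perm α) :
    permPowerSum ι R (optionCongr σ) = ∑ k, X k * permPowerSum ι R σ := by
  simp only [permPowerSum, sum_invariantColourings_optionCongr, colouringMonomial_option_elim,
    mul_sum]
  exact sum_comm

theorem permPowerSum_swap_none_mul_optionCongr (y : α) (σ : Perm α) :
    permPowerSum ι R (swap none (some y) * optionCongr σ) =
      ∑ k, X k * pinnedPowerSum R σ y k := by
  rw [permPowerSum, sum_invariantColourings_swap_none_some_mul]
  simp only [colouringMonomial_option_elim, pinnedPowerSum, mul_sum]
  rw [← sum_fiberwise _ (fun φ => φ y)]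
  refine sum_congr rfl fun k _ => sum_congr rfl fun φ hφ => ?_
  rw [(mem_filter.1 hφ).2]

theorem sum_X_mul_pderiv_permPowerSum (σ : Perm α) :
    ∑ k, X k * pderiv k (permPowerSum ι R σ) = Fintype.card α • permPowerSum ι R σ := by
  simp only [permPowerSum, map_sum, mul_sum, X_mul_pderiv_colouringMonomial, smul_sum]
  rw [sum_comm]
  exact sum_congr rfl fun φ _ => by rw [← sum_smul, sum_fiberCard]

theorem swapPinnedPowerSum_same_colour (σ : Perm α) (x y : α) (k : ι) :
    swapPinnedPowerSum R σ x y k k =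
      ∑ φ ∈ invariantColourings ι σ with φ y = k ∧ φ x = k, colouringMonomial R φ := by
  refine sum_congr (ext fun φ => ?_) fun _ _ => rfl
  rw [mem_filter, mem_filter, and_comm (a := φ y = k)]
  refine and_congr_left fun h => mem_invariantColourings_swap_mul_of_eq (h.1.trans h.2.symm)

theorem X_mul_pderiv_pinnedPowerSum (σ : Perm α) (y : α) (k : ι) :
    X k * pderiv k (pinnedPowerSum R σ y k) =
      pinnedPowerSum R σ y k + ∑ x ∈ univ.erase y, swapPinnedPowerSum R σ x y k k := by
  have at_y : pinnedPowerSum R σ y k = swapPinnedPowerSum R σ y y k k := by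
    simp only [swapPinnedPowerSum_same_colour, and_self, pinnedPowerSum]
  calc
    _ = ∑ φ ∈ invariantColourings ι σ with φ y = k,
          ∑ x, if φ x = k then colouringMonomial R φ else 0 := by
      simp only [pinnedPowerSum, map_sum, mul_sum, X_mul_pderiv_colouringMonomial, fiberCard,
        ← sum_filter, sum_const]
    _ = ∑ x, swapPinnedPowerSum R σ x y k k := by
      rw [sum_comm]
      simp only [swapPinnedPowerSum_same_colour, ← sum_filter, filter_filter]
    _ = _ := by
      rw [at_y]
      exact (add_sum_erase univ (fun x => swapPinnedPowerSum R σ x y k k) (mem_univ y)).symm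

end PowerSums

section LoopEquations

open MvPolynomial

section DividedDifference

variable {α ι R : Type*} [Fintype α] [DecidableEq α] [Fintype ι] [DecidableEq ι] [CommRing R]

theorem mem_invariantColourings_iff_inv_apply {σ : Perm α} {φ : α → ι} :
    φ ∈ invariantColourings ι σ ↔ ∀ z, φ (σ⁻¹ z) = φ z := by
  rw [← invariantColourings_inv, mem_invariantColourings]

theorem mem_invariantColourings_swap_mul_iff {σ : Perm α} {x y : α} {φ : α → ι} :
    φ ∈ invariantColourings ι (swap x y * σ) ↔
      φ (σ⁻¹ y) = φ x ∧ φ (σ⁻¹ x) = φ y ∧ ∀ z, z ≠ x → z ≠ y → φ (σ⁻¹ z) = φ z := by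
  rw [mem_invariantColourings_iff_inv_apply, mul_inv_rev, Equiv.swap_inv]
  simp only [Perm.mul_apply]
  constructor
  · intro h
    refine ⟨by simpa using h x, by simpa using h y, fun z hx hy => ?_⟩
    simpa [Equiv.swap_apply_of_ne_of_ne hx hy] using h z
  · rintro ⟨hx, hy, h⟩ z
    grind

/-- The colourings with colour `k` at the points `x, σ x, …, σ⁻¹ y` and colour `l` on the rest of
the cycle of `σ` through `y`, constant on the other cycles. For `x = y` the whole cycle has colour
`l`, and for `x` outside of this cycle there are no such colourings unless `k = l`. -/
def cutColourings (σ : Perm α) (y : α) (k l : ι) (x : α) : Finset (α → ι) :=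
  {φ | φ y = l ∧ (x ≠ y → φ x = k) ∧
    ∀ z, φ (σ⁻¹ z) = if z = x then l else if z = y then k else φ z}

theorem cutColourings_self (σ : Perm α) (y : α) (k l : ι) :
    cutColourings σ y k l y = {φ ∈ invariantColourings ι σ | φ y = l} := by
  ext φ
  simp only [cutColourings, mem_filter, mem_invariantColourings_iff_inv_apply]
  grind

theorem cutColourings_of_ne (σ : Perm α) {x y : α} (h : x ≠ y) (k l : ι) :
    cutColourings σ y k l x =
      {φ ∈ invariantColourings ι (swap x y * σ) | φ x = k ∧ φ y = l} := by
  ext φ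
  simp only [cutColourings, mem_filter, mem_invariantColourings_swap_mul_iff]
  grind

theorem X_mul_sum_cutColourings_of_ne {σ : Perm α} {x y : α} (h : σ⁻¹ x ≠ y) (k l : ι) :
    X k * ∑ φ ∈ cutColourings σ y k l x, colouringMonomial R φ =
      X l * ∑ φ ∈ cutColourings σ y k l (σ⁻¹ x), colouringMonomial R φ := by
  have inv_inj (a b : α) (h : σ⁻¹ a = σ⁻¹ b) : a = b := σ⁻¹.injective h
  -- Moving the cut from `x` to `σ⁻¹ x` only recolours the point `σ⁻¹ x` from `l` to `k`.
  apply X_mul_sum_colouringMonomial_eq_of_update (σ⁻¹ x) <;>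
    simp only [cutColourings, mem_filter_univ, Function.update_apply] <;>
    generalize σ⁻¹ = τ at * <;> grind

theorem X_mul_sum_cutColourings_apply (σ : Perm α) (y : α) (k l : ι) :
    X k * ∑ φ ∈ cutColourings σ y k l (σ y), colouringMonomial R φ =
      X l * pinnedPowerSum R σ y k := by
  have inv_inj (a b : α) (h : σ⁻¹ a = σ⁻¹ b) : a = b := σ⁻¹.injective h
  have inv_apply : σ⁻¹ (σ y) = y := σ.symm_apply_apply y
  apply X_mul_sum_colouringMonomial_eq_of_update y <;>
    simp only [cutColourings, mem_filter, mem_univ, true_and,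
      mem_invariantColourings_iff_inv_apply, Function.update_apply] <;>
    generalize σ⁻¹ = τ at * <;> grind

theorem X_mul_pinnedPowerSum_sub (σ : Perm α) (y : α) (k l : ι) :
    X k * pinnedPowerSum R σ y k - X l * pinnedPowerSum R σ y l =
      (pinnedPowerSum R σ y k + pinnedPowerSum R σ y l +
        ∑ x ∈ univ.erase y, swapPinnedPowerSum R σ x y k l) * (X k - X l) := by
  let cut (x : α) : MvPolynomial ι R := ∑ φ ∈ cutColourings σ y k l x, colouringMonomial R φ
  have cut_self : cut y = pinnedPowerSum R σ y l := by
    simp only [cut, cutColourings_self, pinnedPowerSum]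
  have sum_cut : ∑ x ∈ univ.erase y, cut x = ∑ x ∈ univ.erase y, swapPinnedPowerSum R σ x y k l :=
    sum_congr rfl fun x hx => by
      simp only [cut, cutColourings_of_ne σ (ne_of_mem_erase hx), swapPinnedPowerSum]
  have shift (z : α) (hz : z ∈ univ.erase y) : X k * cut (σ z) = X l * cut z := by
    have hσz : σ⁻¹ (σ z) = z := σ.symm_apply_apply z
    have := X_mul_sum_cutColourings_of_ne (R := R) (hσz.symm ▸ ne_of_mem_erase hz) k l
    rwa [hσz] at this
  have telescope : X k * (cut y + ∑ x ∈ univ.erase y, cut x) =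
      X l * (pinnedPowerSum R σ y k + ∑ x ∈ univ.erase y, cut x) := by
    rw [add_sum_erase _ _ (mem_univ y), ← Equiv.sum_comp σ, ← add_sum_erase _ _ (mem_univ y),
      mul_add, mul_add, X_mul_sum_cutColourings_apply, mul_sum, mul_sum, sum_congr rfl shift]
  rw [cut_self, sum_cut] at telescope
  linear_combination -telescope

end DividedDifference

variable {α ι R : Type*} [Fintype α] [DecidableEq α] [Fintype ι] [LinearOrder ι] [CommRing R]

/-- The unnormalized expectation of `permPowerSum ι R σ` in the Laguerre unitary ensemble with
density `Δ(q)² ∏ q_k ^ d * exp (-q_k)`. -/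
noncomputable def powerSumMoment (ι R : Type*) [Fintype ι] [LinearOrder ι] [CommRing R] (d : ℕ)
    (σ : Perm α) : R :=
  laguerreFunctional d (permPowerSum ι R σ * vandermondePoly ι R ^ 2)

theorem powerSumMoment_optionCongr (d : ℕ) (σ : Perm α) :
    powerSumMoment ι R d (optionCongr σ) =
      (Fintype.card ι * (Fintype.card ι + d) + Fintype.card α) • powerSumMoment ι R d σ := by
  rw [powerSumMoment, permPowerSum_optionCongr, laguerreFunctional_schwingerDyson d _
    (c := fun _ _ => permPowerSum ι R σ) fun i j => by ring, sum_X_mul_pderiv_permPowerSum,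
    powerSumMoment, ← map_nsmul]
  congr 1
  simp only [sum_const, card_univ, nsmul_eq_mul]
  push_cast
  ring

theorem powerSumMoment_swap_none_mul_optionCongr (d : ℕ) (y : α) (σ : Perm α) :
    powerSumMoment ι R d (swap none (some y) * optionCongr σ) =
      (Fintype.card ι + (Fintype.card ι + d)) • powerSumMoment ι R d σ +
        ∑ x ∈ univ.erase y, powerSumMoment ι R d (swap x y * σ) := by
  have sum_swapped : ∑ i : ι, ∑ j : ι, ∑ x ∈ univ.erase y, swapPinnedPowerSum R σ x y i j =
      ∑ x ∈ univ.erase y, permPowerSum ι R (swap x y * σ) := by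
    simp only [← sum_swapPinnedPowerSum, sum_comm (t := univ.erase y)]
  simp only [powerSumMoment]
  rw [permPowerSum_swap_none_mul_optionCongr,
    laguerreFunctional_schwingerDyson d _ (X_mul_pinnedPowerSum_sub σ y), ← map_nsmul, ← map_sum,
    ← map_add, ← sum_mul]
  congr 1
  simp only [X_mul_pderiv_pinnedPowerSum, sum_add_distrib, sum_swapped, sum_const, ← mul_sum,
    sum_pinnedPowerSum, card_univ, nsmul_eq_mul]
  push_cast
  ring

end LoopEquations

theorem fintype_induction_isEmpty_option {P : ∀ (α : Type u) [Fintype α] [DecidableEq α], Prop}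
    (of_equiv : ∀ {α β : Type u} [Fintype α] [DecidableEq α] [Fintype β] [DecidableEq β],
      α ≃ β → P α → P β)
    (of_isEmpty : ∀ {α : Type u} [Fintype α] [DecidableEq α] [IsEmpty α], P α)
    (option : ∀ {α : Type u} [Fintype α] [DecidableEq α], P α → P (Option α))
    (α : Type u) [Fintype α] [DecidableEq α] : P α := by
  refine Finite.induction_empty_option (P := fun β => ∀ [Fintype β] [DecidableEq β], P β)
    (fun {β γ} e hβ _ _ => ?_) of_isEmpty (fun {β} _ hβ _ _ => ?_) α
  · have : Fintype β := Fintype.ofEquiv γ e.symm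
    have : DecidableEq β := e.decidableEq
    exact of_equiv e hβ
  · classical convert! option hβ

section PowerSumMoment

open MvPolynomial

section IsEmpty

variable {α ι : Type*} [Fintype α] [DecidableEq α] [IsEmpty α] [Fintype ι] [DecidableEq ι]

theorem invariantColourings_of_isEmpty (σ : Perm α) : invariantColourings ι σ = univ :=
  eq_univ_of_forall fun _ => mem_invariantColourings.2 isEmptyElim

theorem permPowerSum_of_isEmpty {R : Type*} [CommRing R] (σ : Perm α) :
    permPowerSum ι R σ = 1 := by
  simp [permPowerSum, colouringMonomial, invariantColourings_of_isEmpty]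

theorem colourCount_of_isEmpty (k : ℕ) (σ : Perm α) : colourCount k σ = 1 := by
  simp [colourCount, invariantColourings_of_isEmpty]

theorem factorizationSum_of_isEmpty (m n : ℕ) (π : Perm α) : factorizationSum m n π = 1 := by
  simp [factorizationSum, colourCount_of_isEmpty]

end IsEmpty

theorem powerSumMoment_eq_factorizationSum_smul {ι R : Type*} [Fintype ι] [LinearOrder ι]
    [CommRing R] (d : ℕ) {α : Type u} [Fintype α] [DecidableEq α] (π : Perm α) :
    powerSumMoment ι R d π =
      factorizationSum (Fintype.card ι) (Fintype.card ι + d) π •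
        laguerreFunctional d (vandermondePoly ι R ^ 2) := by
  refine fintype_induction_isEmpty_option (P := fun α _ _ => ∀ π : Perm α,
    powerSumMoment ι R d π = factorizationSum (Fintype.card ι) (Fintype.card ι + d) π •
      laguerreFunctional d (vandermondePoly ι R ^ 2))
    (fun e ih π => ?_) (fun π => ?_) (fun ih π => ?_) α π
  · obtain ⟨σ, rfl⟩ := e.permCongr.surjective π
    rw [factorizationSum_permCongr, ← ih σ, powerSumMoment, permPowerSum_permCongr,
      powerSumMoment]
  · rw [powerSumMoment, permPowerSum_of_isEmpty, factorizationSum_of_isEmpty, one_mul, one_smul]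
  · obtain ⟨_ | y, σ, rfl⟩ := exists_eq_swap_none_mul_optionCongr π
    · rw [Equiv.swap_self, ← Perm.one_def, one_mul, powerSumMoment_optionCongr,
        factorizationSum_optionCongr, ih, smul_smul]
    · simp only [powerSumMoment_swap_none_mul_optionCongr,
        factorizationSum_swap_none_mul_optionCongr, ih, smul_smul, ← sum_smul, ← add_smul]

end PowerSumMoment

section Stabilizer

variable {α β ι : Type*} [Fintype α] [DecidableEq α] [Fintype β] [DecidableEq β]
variable [Fintype ι] [DecidableEq ι]

/-- The sum of `lam ^ cyc π` over the stabilizer of the colouring `φ`. -/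
def stabilizerSum (lam : ℕ) (φ : α → ι) : ℕ :=
  ∑ π : Perm α with φ ∈ invariantColourings ι π, colourCount lam π

theorem stabilizerSum_comp_equiv (e : α ≃ β) (lam : ℕ) (φ : β → ι) :
    stabilizerSum lam (φ ∘ e) = stabilizerSum lam φ :=
  sum_equiv e.permCongr (by simp [comp_mem_invariantColourings_iff])
    fun σ _ => (colourCount_permCongr e lam σ).symm

theorem stabilizerSum_option (lam : ℕ) (φ : Option α → ι) :
    stabilizerSum lam φ =
      (lam + fiberCard (φ ∘ some) (φ none)) * stabilizerSum lam (φ ∘ some) := by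
  have decomposed (b : Option α) :
      ∑ σ : Perm α, (if φ ∈ invariantColourings ι (swap none b * optionCongr σ) then
        colourCount lam (swap none b * optionCongr σ) else 0) =
      (if φ b = φ none then b.elim lam fun _ => 1 else 0) * stabilizerSum lam (φ ∘ some) := by
    rw [stabilizerSum, sum_filter, mul_sum]
    refine sum_congr rfl fun σ _ => ?_
    rw [colourCount_swap_none_mul_optionCongr, ite_zero_mul_ite_zero]
    simp only [mem_invariantColourings_swap_none_mul_optionCongr, and_comm, eq_comm (a := φ none)]
  rw [stabilizerSum, sum_filter, sum_perm_option]
  simp only [decomposed, ← sum_mul, Fintype.sum_option, Option.elim, if_true, fiberCard,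
    card_filter, Function.comp_apply]

theorem stabilizerSum_eq_prod_ascFactorial (lam : ℕ) {α : Type u} [Fintype α] [DecidableEq α]
    (φ : α → ι) : stabilizerSum lam φ = ∏ k, lam.ascFactorial (fiberCard φ k) := by
  refine fintype_induction_isEmpty_option (P := fun α _ _ => ∀ φ : α → ι,
    stabilizerSum lam φ = ∏ k, lam.ascFactorial (fiberCard φ k))
    (fun e ih φ => ?_) (fun φ => ?_) (fun ih φ => ?_) α φ
  · simp only [← stabilizerSum_comp_equiv e, ih, fiberCard_comp_equiv]
  · simp [stabilizerSum, fiberCard, colourCount_of_isEmpty, invariantColourings_of_isEmpty,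
      eq_iff_true_of_subsingleton]
  · have at_none : lam.ascFactorial (fiberCard φ (φ none)) =
        (lam + fiberCard (φ ∘ some) (φ none)) *
          lam.ascFactorial (fiberCard (φ ∘ some) (φ none)) := by
      rw [fiberCard_option, if_pos rfl, add_comm 1, Nat.ascFactorial_succ]
    have off_none : ∏ k ∈ univ.erase (φ none), lam.ascFactorial (fiberCard φ k) =
        ∏ k ∈ univ.erase (φ none), lam.ascFactorial (fiberCard (φ ∘ some) k) :=
      prod_congr rfl fun k hk => by
        rw [fiberCard_option, if_neg (ne_of_mem_erase hk).symm, zero_add]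
    rw [stabilizerSum_option, ih, ← mul_prod_erase univ _ (mem_univ (φ none)),
      ← mul_prod_erase univ (fun k => lam.ascFactorial (fiberCard φ k)) (mem_univ (φ none)),
      at_none, off_none, mul_assoc]

end Stabilizer

section Multinomial

open MvPolynomial

variable {α ι R : Type*} [Fintype α] [Fintype ι] [CommRing R]

theorem cast_multinomial_univ {K : Type*} [Field K] [CharZero K] (a : ι → ℕ) :
    (Nat.multinomial univ a : K) = (∑ k, a k).factorial / ∏ k, ((a k).factorial : K) := by
  rw [eq_div_iff (prod_ne_zero_iff.2 fun k _ => Nat.cast_ne_zero.2 (Nat.factorial_ne_zero _)),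
    mul_comm]
  exact_mod_cast Nat.multinomial_spec univ a

variable [DecidableEq ι]

theorem colouringMonomial_eq_prod_X_pow (φ : α → ι) :
    colouringMonomial R φ = ∏ k, X k ^ fiberCard φ k := by
  rw [colouringMonomial, ← prod_fiberwise' univ φ]
  simp only [prod_const, fiberCard]

theorem sum_fiberCard_eq_sum_multinomial_smul [DecidableEq α] (F : (ι → ℕ) → R) :
    ∑ φ : α → ι, F (fiberCard φ) =
      ∑ a ∈ piAntidiag univ (Fintype.card α), Nat.multinomial univ a • F a := by
  have sum_colouringMonomial : (∑ k : ι, (X k : MvPolynomial ι R)) ^ Fintype.card α =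
      ∑ φ : α → ι, colouringMonomial R φ := by
    rw [← card_univ, ← prod_const, prod_univ_sum, Fintype.piFinset_univ]
    rfl
  rw [sum_pow_eq_sum_piAntidiag] at sum_colouringMonomial
  simpa only [map_sum, colouringMonomial_eq_prod_X_pow, ← nsmul_eq_mul, map_nsmul,
    momentFunctional_prod_X_pow] using
    (congrArg (momentFunctional F) sum_colouringMonomial).symm

end Multinomial

section WeightedSum

open MvPolynomial

variable {α ι R : Type*} [Fintype α] [DecidableEq α] [Fintype ι] [LinearOrder ι] [CommRing R]

theorem sum_colourCount_smul_powerSumMoment (lam d : ℕ) :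
    ∑ π : Perm α, colourCount lam π • powerSumMoment ι R d π =
      ∑ a ∈ piAntidiag univ (Fintype.card α), (Nat.multinomial univ a *
        ∏ k, lam.ascFactorial (a k)) •
          laguerreFunctional d ((∏ k : ι, X k ^ a k) * vandermondePoly ι R ^ 2) := by
  calc
    _ = ∑ π : Perm α, ∑ φ : α → ι, if φ ∈ invariantColourings ι π then
          colourCount lam π • laguerreFunctional d
            (colouringMonomial R φ * vandermondePoly ι R ^ 2) else 0 := by
      simp only [powerSumMoment, permPowerSum, sum_mul, map_sum, smul_sum, sum_ite_mem, univ_inter]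
    _ = ∑ φ : α → ι, stabilizerSum lam φ • laguerreFunctional d
          (colouringMonomial R φ * vandermondePoly ι R ^ 2) := by
      rw [sum_comm]
      simp only [← sum_filter, ← sum_smul, stabilizerSum]
    _ = _ := by
      simp only [stabilizerSum_eq_prod_ascFactorial, colouringMonomial_eq_prod_X_pow]
      rw [sum_fiberCard_eq_sum_multinomial_smul fun a => (∏ k, lam.ascFactorial (a k)) •
        laguerreFunctional d ((∏ k : ι, X k ^ a k) * vandermondePoly ι R ^ 2)]
      simp only [smul_smul]

theorem fSum_eq_sum_factorizationSum (r m n lam : ℕ) :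
    fSum r m n lam = ∑ π : Perm (Fin r), colourCount lam π * factorizationSum m n π := by
  have colourCount_inv (π : Perm (Fin r)) : colourCount lam π⁻¹ = colourCount lam π := by
    rw [colourCount, invariantColourings_inv, colourCount]
  simp only [fSum, factorizationSum, ← colourCount_eq_pow_cyc, colourCount_inv, mul_sum]
  rw [sum_comm (f := fun π σ : Perm (Fin r) =>
    colourCount lam π * (colourCount m σ * colourCount n (σ⁻¹ * π)))]
  refine sum_congr rfl fun σ _ => Fintype.sum_equiv (Equiv.mulLeft σ) _ _ fun τ => ?_
  rw [Equiv.coe_mulLeft, inv_mul_cancel_left, mul_comm (colourCount lam _)]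

theorem fSum_smul_laguerreFunctional_vandermondePoly_sq (r lam d : ℕ) :
    fSum r (Fintype.card ι) (Fintype.card ι + d) lam •
        laguerreFunctional d (vandermondePoly ι R ^ 2) =
      ∑ a ∈ piAntidiag univ r, (Nat.multinomial univ a * ∏ k, lam.ascFactorial (a k)) •
        laguerreFunctional d ((∏ k : ι, X k ^ a k) * vandermondePoly ι R ^ 2) := by
  have weighted := sum_colourCount_smul_powerSumMoment (α := Fin r) (ι := ι) (R := R) lam d
  rw [Fintype.card_fin] at weighted
  simp only [← weighted, powerSumMoment_eq_factorizationSum_smul, fSum_eq_sum_factorizationSum,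
    sum_smul, smul_smul]

end WeightedSum

section Integrals

open MvPolynomial

theorem integrableOn_pow_mul_exp_neg_Ici (d : ℕ) :
    IntegrableOn (fun x : ℝ => x ^ d * Real.exp (-x)) (Set.Ici 0) := by
  rw [integrableOn_Ici_iff_integrableOn_Ioi]
  refine (Real.GammaIntegral_convergent (s := d + 1) (by positivity)).congr_fun (fun x _ => ?_)
    measurableSet_Ioi
  simp only [add_sub_cancel_right, Real.rpow_natCast, mul_comm]

theorem integral_pow_mul_exp_neg_Ici (d : ℕ) :
    ∫ x in Set.Ici (0 : ℝ), x ^ d * Real.exp (-x) = d.factorial := by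
  rw [integral_Ici_eq_integral_Ioi, ← Real.Gamma_nat_eq_factorial,
    Real.Gamma_eq_integral (by positivity)]
  refine setIntegral_congr_fun measurableSet_Ioi fun x _ => ?_
  rw [add_sub_cancel_right, Real.rpow_natCast, mul_comm]

theorem orthant_eq_pi (m : ℕ) : orthant m = Set.univ.pi fun _ => Set.Ici 0 := by
  ext q
  simp only [orthant, Set.mem_ofPred_eq, Set.mem_univ_pi, Set.mem_Ici]

theorem volume_restrict_orthant (m : ℕ) :
    volume.restrict (orthant m) = Measure.pi fun _ => volume.restrict (Set.Ici 0) := by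
  rw [orthant_eq_pi, volume_pi, Measure.restrict_pi_pi]

theorem eval_monomial_mul_weight {ι : Type*} [Fintype ι] (d : ℕ) (a : ι →₀ ℕ) (c : ℝ)
    (q : ι → ℝ) :
    eval q (monomial a c) * ∏ k, (q k ^ d * Real.exp (-q k)) =
      c * ∏ k, (q k ^ (d + a k) * Real.exp (-q k)) := by
  rw [eval_monomial, Finsupp.prod_fintype _ _ fun _ => pow_zero _, mul_assoc, ← prod_mul_distrib]
  congr 1
  exact prod_congr rfl fun k _ => by ring

theorem integrable_and_integral_eval_mul_weight {m : ℕ} (d : ℕ) (f : MvPolynomial (Fin m) ℝ) :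
    IntegrableOn (fun q => eval q f * ∏ k, (q k ^ d * Real.exp (-q k))) (orthant m) ∧
      ∫ q in orthant m, eval q f * ∏ k, (q k ^ d * Real.exp (-q k)) = laguerreFunctional d f := by
  rw [IntegrableOn, volume_restrict_orthant]
  induction f using MvPolynomial.induction_on' with
  | monomial a c =>
    simp only [eval_monomial_mul_weight]
    refine ⟨(Integrable.fintype_prod fun k =>
      integrableOn_pow_mul_exp_neg_Ici (d + a k)).const_mul c, ?_⟩
    rw [integral_const_mul, laguerreFunctional, momentFunctional_monomial,
      integral_fintype_prod_eq_prod fun k x => x ^ (d + a k) * Real.exp (-x)]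
    simp only [integral_pow_mul_exp_neg_Ici]
  | add p q hp hq =>
    simp only [map_add, add_mul]
    exact ⟨hp.1.add hq.1, by rw [integral_add hp.1 hq.1, hp.2, hq.2]⟩

theorem eval_vandermondePoly {m : ℕ} (q : Fin m → ℝ) :
    eval q (vandermondePoly (Fin m) ℝ) = vandermonde q := by
  simp [vandermondePoly, vandermonde]

theorem integral_vandermonde_sq_mul_weight {m : ℕ} (d : ℕ) (a : Fin m → ℕ) :
    ∫ q in orthant m, vandermonde q ^ 2 * ∏ k, (q k ^ (d + a k) * Real.exp (-q k)) =
      laguerreFunctional d ((∏ k, X k ^ a k) * vandermondePoly (Fin m) ℝ ^ 2) := by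
  rw [← (integrable_and_integral_eval_mul_weight d _).2]
  congr 1 with q
  simp only [map_mul, map_pow, map_prod, eval_X, eval_vandermondePoly, pow_add, prod_mul_distrib]
  ring

theorem lam_eq_laguerreFunctional (m n : ℕ) :
    Lam m n = laguerreFunctional (n - m) (vandermondePoly (Fin m) ℝ ^ 2) := by
  simpa [Lam] using integral_vandermonde_sq_mul_weight (n - m) (0 : Fin m → ℕ)

theorem vandermonde_ne_zero_of_injective {m : ℕ} {q : Fin m → ℝ} (hq : Function.Injective q) :
    vandermonde q ≠ 0 :=
  prod_ne_zero_iff.2 fun _ hp => sub_ne_zero.2 (hq.ne (mem_filter.1 hp).2.ne')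

theorem strictMono_of_mem_Ioo {m : ℕ} {q : Fin m → ℝ}
    (hq : ∀ k : Fin m, q k ∈ Set.Ioo (k : ℝ) (k + 1)) : StrictMono q := fun i j hij => by
  have : (i : ℝ) + 1 ≤ j := by exact_mod_cast hij
  linarith [(hq i).2, (hq j).1]

theorem lam_pos (m n : ℕ) : 0 < Lam m n := by
  have integrable := (integrable_and_integral_eval_mul_weight (n - m)
    (vandermondePoly (Fin m) ℝ ^ 2)).1
  simp only [map_pow, eval_vandermondePoly] at integrable
  have measurableSet_orthant : MeasurableSet (orthant m) := by
    rw [orthant_eq_pi]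
    exact .univ_pi fun _ => measurableSet_Ici
  rw [Lam, setIntegral_pos_iff_support_of_nonneg_ae _ integrable]
  · -- The support contains the box of points `q` with `k < q k < k + 1` for all `k`.
    refine lt_of_lt_of_le (b := volume (Set.univ.pi fun k : Fin m => Set.Ioo (k : ℝ) (k + 1)))
      (by simp [Real.volume_pi_Ioo]) (measure_mono fun q hq => ?_)
    have mem_Ioo (k : Fin m) : q k ∈ Set.Ioo (k : ℝ) (k + 1) := hq k trivial
    have pos (k : Fin m) : 0 < q k := (Nat.cast_nonneg _).trans_lt (mem_Ioo k).1
    have vandermonde_ne_zero : vandermonde q ≠ 0 :=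
      vandermonde_ne_zero_of_injective (strictMono_of_mem_Ioo mem_Ioo).injective
    refine ⟨mul_ne_zero (pow_ne_zero 2 vandermonde_ne_zero) (prod_ne_zero_iff.2 fun k _ => ?_),
      fun k => (pos k).le⟩
    have := pos k
    positivity
  · refine (ae_restrict_iff' measurableSet_orthant).2 (.of_forall fun q hq => ?_)
    refine mul_nonneg (sq_nonneg _) (prod_nonneg fun k _ => ?_)
    have : 0 ≤ q k := hq k
    positivity

end Integrals

/-- Coefficient of `x^r` in the integral representation of `F(m,n,λ;x)`. -/
theorem fSum_div_factorial_eq_integral (m n lam r : ℕ) (hm : 0 < m) (hn : 0 < n)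
    (hlam : 0 < lam) (hmn : m ≤ n) :
    (fSum r m n lam : ℝ) / r.factorial =
      (1 / Lam m n) *
        ∑ a ∈ Finset.Nat.antidiagonalTuple m r,
          (∏ k : Fin m, (Nat.ascFactorial lam (a k) : ℝ) / (a k).factorial) *
            ∫ q in orthant m, (vandermonde q) ^ 2 *
              ∏ k : Fin m, (q k ^ (n - m + a k) * Real.exp (-(q k))) := by
  have moments := fSum_smul_laguerreFunctional_vandermondePoly_sq
    (ι := Fin m) (R := ℝ) r lam (n - m)
  simp only [Fintype.card_fin, Nat.add_sub_cancel' hmn, ← integral_vandermonde_sq_mul_weight,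
    ← lam_eq_laguerreFunctional, piAntidiag_univ_fin_eq_antidiagonalTuple, nsmul_eq_mul] at moments
  rw [div_eq_iff (by positivity), one_div, mul_assoc, eq_inv_mul_iff_mul_eq₀ (lam_pos m n).ne',
    mul_comm (Lam m n), moments, sum_mul]
  refine sum_congr rfl fun a ha => ?_
  rw [Nat.cast_mul, cast_multinomial_univ, Nat.mem_antidiagonalTuple.1 ha, Nat.cast_prod,
    prod_div_distrib]
  ring
end

section
/- For every positive integer m and all r ≥ 1, the one-variable specialisation H_r(1,1,m) of the rooted-hypermap generating polynomial satisfies H_r(1,1,m) = r · m^{(r)} − Σ_{k=1}^{r−1} m^{(k)} · H_{r−k}(1,1,m), where m^{(k)} = Γ(m+k)/Γ(m) = m(m+1)⋯(m+k−1) is the ascending factorial. -/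
open Finset

/-- A pair of permutations is transitive if the subgroup they generate acts
transitively on `Fin r`. -/
def IsTransitivePair {r : ℕ} (σ τ : Equiv.Perm (Fin r)) : Prop :=
  ∀ x y : Fin r, ∃ g ∈ Subgroup.closure ({σ, τ} : Set (Equiv.Perm (Fin r))), g x = y

open Classical in
/-- `h_r(m,n,λ) = Σ_{transitive (σ,τ)} m^{cyc σ} n^{cyc τ} λ^{cyc((στ)⁻¹)}`. -/
noncomputable def hSum (r m n lam : ℕ) : ℕ :=
  ∑ p ∈ Finset.univ.filter
      (fun p : Equiv.Perm (Fin r) × Equiv.Perm (Fin r) => IsTransitivePair p.1 p.2),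
    m ^ cyc p.1 * n ^ cyc p.2 * lam ^ cyc (p.1 * p.2)⁻¹

/-- `H_r(m,n,λ) = h_r(m,n,λ)/(r-1)!`, the generating polynomial for rooted
hypermaps with `r` darts. -/
noncomputable def Hpoly (r m n lam : ℕ) : ℚ :=
  (hSum r m n lam : ℚ) / (r - 1).factorial

/-!
A permutation `σ` fixes exactly `m ^ cyc σ` of the `m`-colourings of the darts, so Burnside's lemma
for the symmetric group acting on colourings gives `∑ σ, m ^ cyc σ = m^{(r)}`. Hence all pairs
`(σ, τ)`, transitive or not, have total weight `r! * m^{(r)}`: for fixed `σ`, the permutation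
`(στ)⁻¹` runs over the whole symmetric group. On the other hand, the orbit of a chosen dart splits a
pair into a transitive pair on the orbit and an arbitrary pair on its complement. Summing over the
`r` choices of the dart and dividing by `r!` yields `r * m^{(r)} = ∑_{k < r} m^{(k)} * H_{r-k}`,
whose term `k = 0` is `H_r`.
-/

open Equiv MulAction

section NumCycles

variable {α β : Type*} [Fintype α] [DecidableEq α] [Fintype β] [DecidableEq β]

/-- The number of cycles of a permutation of an arbitrary finite type, fixed points included,
as the number of parts of its cycle partition; it extends `cyc` beyond `Fin r`. -/
def numCycles (σ : Perm α) : ℕ :=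
  σ.partition.parts.card

theorem numCycles_eq_card_cycleType_add (σ : Perm α) :
    numCycles σ = σ.cycleType.card + (Fintype.card α - σ.cycleType.sum) := by
  simp [numCycles, Perm.parts_partition, Perm.sum_cycleType]

theorem numCycles_eq_card_cycleType_add_card_fixed (σ : Perm α) :
    numCycles σ = σ.cycleType.card + #{x | σ x = x} := by
  rw [numCycles_eq_card_cycleType_add, ← Perm.card_fixedPoints, Fintype.card_subtype]
  rfl

theorem cyc_eq_numCycles {r : ℕ} (σ : Perm (Fin r)) : cyc σ = numCycles σ :=
  (numCycles_eq_card_cycleType_add_card_fixed σ).symm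

theorem cycleType_permCongr (e : α ≃ β) (σ : Perm α) :
    (e.permCongr σ).cycleType = σ.cycleType := by
  rw [← Perm.cycleType_extendDomain (p := fun _ : β => True)
    (e.trans (Equiv.subtypeUnivEquiv fun _ => trivial).symm)]
  congr 1

theorem numCycles_permCongr (e : α ≃ β) (σ : Perm α) :
    numCycles (e.permCongr σ) = numCycles σ := by
  simp only [numCycles_eq_card_cycleType_add, cycleType_permCongr, Fintype.card_congr e]

variable (p : α → Prop) [DecidablePred p]

theorem cycleType_subtypeCongr (σ : Perm {x // p x}) (τ : Perm {x // ¬p x}) :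
    (σ.subtypeCongr τ).cycleType = σ.cycleType + τ.cycleType := by
  have disjoint : (Perm.ofSubtype σ).Disjoint (Perm.ofSubtype τ) := by
    intro x
    by_cases hx : p x
    · exact .inr (Perm.ofSubtype_apply_of_not_mem τ (not_not.2 hx))
    · exact .inl (Perm.ofSubtype_apply_of_not_mem σ hx)
  have factor : σ.subtypeCongr τ = Perm.ofSubtype σ * Perm.ofSubtype τ := by
    ext x
    by_cases hx : p x
    · simp [hx, Perm.ofSubtype_apply_of_not_mem, Perm.ofSubtype_apply_of_mem]
    · simp [hx, Perm.ofSubtype_apply_of_mem τ hx, Perm.ofSubtype_apply_of_not_mem σ (τ ⟨x, hx⟩).2]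
  rw [factor, disjoint.cycleType_mul, Perm.cycleType_ofSubtype, Perm.cycleType_ofSubtype]

theorem numCycles_subtypeCongr (σ : Perm {x // p x}) (τ : Perm {x // ¬p x}) :
    numCycles (σ.subtypeCongr τ) = numCycles σ + numCycles τ := by
  have hσ := σ.sum_cycleType_le
  have hτ := τ.sum_cycleType_le
  have hcard := Fintype.card_congr (Equiv.sumCompl p)
  rw [Fintype.card_sum] at hcard
  simp only [numCycles_eq_card_cycleType_add, cycleType_subtypeCongr, Multiset.card_add,
    Multiset.sum_add]
  omega

end NumCycles

section Colourings

variable {α κ : Type*}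

theorem sameCycle_setoid_le_ker_iff {σ : Perm α} {f : α → κ} :
    Perm.SameCycle.setoid σ ≤ Setoid.ker f ↔ f ∘ σ = f := by
  refine ⟨fun h => funext fun x => (h ⟨1, by simp⟩ : f x = f (σ x)).symm, ?_⟩
  rintro h x - ⟨i, rfl⟩
  have zpow_mem : DomMulAct.mk σ ^ i ∈ stabilizer (Perm α)ᵈᵐᵃ f :=
    zpow_mem (DomMulAct.mem_stabilizer_iff.2 h) i
  exact (congrFun (DomMulAct.mem_stabilizer_iff.1 zpow_mem) x).symm

variable [Fintype α]

theorem card_quotient_sameCycle [DecidableEq α] (σ : Perm α) :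
    Nat.card (Quotient (Perm.SameCycle.setoid σ)) = numCycles σ := by
  let label (x : α) : Perm α ⊕ α := if σ x = x then .inr x else .inl (σ.cycleOf x)
  have ker_label : Setoid.ker label = Perm.SameCycle.setoid σ := by
    ext x y
    change label x = label y ↔ σ.SameCycle x y
    by_cases hx : σ x = x <;> by_cases hy : σ y = y
    · simpa [label, hx, hy] using ⟨fun h => h ▸ .rfl, fun h => h.eq_of_left hx⟩
    · simpa [label, hx, hy] using fun h => hy (h.apply_eq_self_iff.1 hx)
    · simpa [label, hx, hy] using fun h => hx (h.apply_eq_self_iff.2 hy)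
    · simp [label, hx, hy, Perm.sameCycle_iff_cycleOf_eq_of_mem_support]
  have range_label :
      Set.range label = σ.cycleFactorsFinset.disjSum ({x | σ x = x} : Finset α) := by
    ext (c | x)
    · constructor
      · rintro ⟨x, hx⟩
        by_cases h : σ x = x
        · simp [label, h] at hx
        · obtain rfl : σ.cycleOf x = c := by simpa [label, h] using hx
          simpa [Perm.cycleOf_mem_cycleFactorsFinset_iff] using h
      · intro hc
        replace hc : c ∈ σ.cycleFactorsFinset := by simpa using hc
        obtain ⟨x, hx⟩ := (Perm.mem_cycleFactorsFinset_iff.1 hc).1.nonempty_support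
        have hx' := Perm.mem_support.1 (Perm.mem_cycleFactorsFinset_support_le hc hx)
        exact ⟨x, by simp [label, hx', Perm.cycle_is_cycleOf hx hc]⟩
    · simp [label, ite_eq_iff]
  rw [← ker_label, Nat.card_congr (Setoid.quotientKerEquivRange label), range_label]
  simp [numCycles_eq_card_cycleType_add_card_fixed, Perm.cycleType_def]

theorem card_comp_eq_self [DecidableEq α] (σ : Perm α) :
    Nat.card {f : α → κ // f ∘ σ = f} = Nat.card κ ^ numCycles σ := by
  rw [← card_quotient_sameCycle, ← Nat.card_fun]
  exact Nat.card_congr <|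
    (Equiv.subtypeEquivRight fun _ => sameCycle_setoid_le_ker_iff.symm).trans
      (Setoid.liftEquiv (Perm.SameCycle.setoid σ))

theorem exists_comp_perm_eq_iff {f g : α → κ} :
    (∃ σ : Perm α, f ∘ σ = g) ↔ univ.val.map f = univ.val.map g := by
  classical
  constructor
  · rintro ⟨σ, rfl⟩
    rw [← Multiset.map_map, Multiset.map_univ_val_equiv]
  · intro h
    have fibreEquiv (c : κ) : Nonempty ({x // g x = c} ≃ {x // f x = c}) := by
      rw [← Fintype.card_eq, Fintype.card_subtype, Fintype.card_subtype]
      simpa [Multiset.count_map, eq_comm, ← Finset.filter_val] using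
        congrArg (Multiset.count c) h.symm
    exact ⟨.ofFiberEquiv fun c => (fibreEquiv c).some, funext <| Equiv.ofFiberEquiv_map _⟩

theorem card_orbits_colourings :
    Nat.card (orbitRel.Quotient (Perm α)ᵈᵐᵃ (α → κ)) =
      (Nat.card κ).multichoose (Fintype.card α) := by
  classical
  let colours (f : α → κ) : Sym κ (Fintype.card α) := ⟨univ.val.map f, by simp⟩
  have ker_colours : orbitRel (Perm α)ᵈᵐᵃ (α → κ) = Setoid.ker colours := by
    ext f g
    rw [orbitRel_apply, mem_orbit_iff, DomMulAct.mk.surjective.exists, Setoid.ker_def,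
      eq_comm, ← Sym.coe_inj]
    exact exists_comp_perm_eq_iff
  have surjective_colours : Function.Surjective colours := by
    rintro ⟨s, hs⟩
    let e : α ≃ s.ToType := Fintype.equivOfCardEq (by rw [Multiset.card_coe, hs])
    refine ⟨fun x => (e x).1, Subtype.ext ?_⟩
    change univ.val.map ((fun c : s.ToType => c.1) ∘ e) = s
    rw [← Multiset.map_map, Multiset.map_univ_val_equiv, Multiset.map_univ_coe]
  rw [← Sym.natCard_sym_eq_multichoose, orbitRel.Quotient, ker_colours]
  exact Nat.card_congr (Setoid.quotientKerEquivOfSurjective colours surjective_colours)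

theorem sum_pow_numCycles [DecidableEq α] (m : ℕ) :
    ∑ σ : Perm α, m ^ numCycles σ = m.ascFactorial (Fintype.card α) := by
  classical
  have card_fixedBy (σ : Perm α) :
      Fintype.card (fixedBy (α → Fin m) (DomMulAct.mk σ)) = m ^ numCycles σ := by
    rw [← Nat.card_eq_fintype_card]
    exact (card_comp_eq_self σ).trans (by rw [Nat.card_fin])
  let _ : Fintype (Perm α)ᵈᵐᵃ := Fintype.ofEquiv (Perm α) DomMulAct.mk
  have burnside := sum_card_fixedBy_eq_card_orbits_mul_card_group (Perm α)ᵈᵐᵃ (α → Fin m)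
  calc ∑ σ : Perm α, m ^ numCycles σ
      = ∑ g : (Perm α)ᵈᵐᵃ, Fintype.card (fixedBy (α → Fin m) g) :=
        Fintype.sum_equiv DomMulAct.mk _ _ fun σ => (card_fixedBy σ).symm
    _ = m.multichoose (Fintype.card α) * (Fintype.card α).factorial := by
        rw [burnside, ← Nat.card_eq_fintype_card, card_orbits_colourings, Nat.card_fin,
          Fintype.card_congr DomMulAct.mk.symm, Fintype.card_perm]
    _ = m.ascFactorial (Fintype.card α) := by
        rw [Nat.multichoose_eq, mul_comm, Nat.ascFactorial_eq_factorial_mul_choose']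

end Colourings

section PermutationPairs

variable {α β : Type*}

/-- The group generated by a pair of permutations; for the pair of vertex and edge rotations of
a hypermap this is its cartographic group, whose orbits on darts are the connected components. -/
abbrev cartographicGroup (q : Perm α × Perm α) : Subgroup (Perm α) :=
  Subgroup.closure {q.1, q.2}

theorem isTransitivePair_iff_isPretransitive {r : ℕ} {σ τ : Perm (Fin r)} :
    IsTransitivePair σ τ ↔ IsPretransitive (cartographicGroup (σ, τ)) (Fin r) := by
  simp [IsTransitivePair, isPretransitive_iff, Subgroup.smul_def]

theorem isPretransitive_cartographicGroup_permCongr (e : α ≃ β) (q : Perm α × Perm α) :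
    IsPretransitive (cartographicGroup (e.permCongr q.1, e.permCongr q.2)) β ↔
      IsPretransitive (cartographicGroup q) α := by
  have map_eq : cartographicGroup (e.permCongr q.1, e.permCongr q.2) =
      (cartographicGroup q).map e.permCongrHom.toMonoidHom := by
    rw [MonoidHom.map_closure, Set.image_pair]
    rfl
  simp [map_eq, isPretransitive_iff, Subgroup.smul_def, e.surjective.forall,
    Equiv.permCongr_apply]

variable (p : α → Prop) [DecidablePred p]

/-- The disjoint union of a pair of permutations of `{x // p x}` and a pair of permutations of its
complement. -/
def gluePairs (q : (Perm {x // p x} × Perm {x // p x}) × (Perm {x // ¬p x} × Perm {x // ¬p x})) :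
    Perm α × Perm α :=
  (q.1.1.subtypeCongr q.2.1, q.1.2.subtypeCongr q.2.2)

theorem gluePairs_injective : Function.Injective (gluePairs p) := by
  rintro ⟨⟨a, b⟩, c, d⟩ ⟨⟨a', b'⟩, c', d'⟩ h
  obtain ⟨hσ, hτ⟩ := Prod.mk.inj h
  have hac := Perm.subtypeCongrHom_injective p (a₁ := (a, c)) (a₂ := (a', c')) hσ
  have hbd := Perm.subtypeCongrHom_injective p (a₁ := (b, d)) (a₂ := (b', d')) hτ
  simp_all

variable {p}

theorem subtypePerm_subtypeCongr_subtypePerm (σ : Perm α) (h : ∀ x, p (σ x) ↔ p x) :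
    (σ.subtypePerm h).subtypeCongr (σ.subtypePerm fun x => not_congr (h x)) = σ := by
  ext x
  by_cases hx : p x <;> simp [hx]

theorem apply_mem_orbit_iff {G : Subgroup (Perm α)} {σ : Perm α} (hσ : σ ∈ G) {x y : α} :
    σ y ∈ orbit G x ↔ y ∈ orbit G x := by
  rw [← orbit_eq_iff, ← orbit_eq_iff (a := y), ← orbit_smul (⟨σ, hσ⟩ : G) y]
  rfl

theorem mem_range_gluePairs_of_orbit_eq {q : Perm α × Perm α} {x : α}
    (h : orbit (cartographicGroup q) x = {y | p y}) : q ∈ Set.range (gluePairs p) := by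
  have mem_orbit_iff (y : α) : y ∈ orbit (cartographicGroup q) x ↔ p y := by rw [h]; rfl
  have preserves {σ : Perm α} (hσ : σ ∈ cartographicGroup q) (y : α) : p (σ y) ↔ p y := by
    rw [← mem_orbit_iff, ← mem_orbit_iff, apply_mem_orbit_iff hσ]
  have h₁ := preserves (Subgroup.subset_closure (.inl rfl) : q.1 ∈ cartographicGroup q)
  have h₂ := preserves (Subgroup.subset_closure (.inr rfl) : q.2 ∈ cartographicGroup q)
  exact ⟨((q.1.subtypePerm h₁, q.2.subtypePerm h₂),
      q.1.subtypePerm fun y => not_congr (h₁ y), q.2.subtypePerm fun y => not_congr (h₂ y)),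
    Prod.ext (subtypePerm_subtypeCongr_subtypePerm q.1 h₁)
      (subtypePerm_subtypeCongr_subtypePerm q.2 h₂)⟩

theorem orbit_cartographicGroup_gluePairs
    (q : (Perm {x // p x} × Perm {x // p x}) × (Perm {x // ¬p x} × Perm {x // ¬p x}))
    (x : {x // p x}) :
    orbit (cartographicGroup (gluePairs p q)) (x : α) =
      Subtype.val '' orbit (cartographicGroup q.1) x := by
  obtain ⟨⟨a, b⟩, c, d⟩ := q
  let G : Subgroup (Perm {x // p x} × Perm {x // ¬p x}) := Subgroup.closure {(a, c), (b, d)}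
  have map_fst : cartographicGroup (a, b) = G.map (MonoidHom.fst _ _) := by
    rw [MonoidHom.map_closure, Set.image_pair]
    rfl
  have map_glue : cartographicGroup (gluePairs p ((a, b), (c, d))) =
      G.map (Perm.subtypeCongrHom p) := by
    rw [MonoidHom.map_closure, Set.image_pair]
    rfl
  ext y
  constructor
  · rintro ⟨⟨g, hg⟩, rfl⟩
    obtain ⟨h, hG, rfl⟩ := Subgroup.mem_map.1 (map_glue ▸ hg)
    refine ⟨h.1 x, ⟨⟨h.1, map_fst ▸ Subgroup.mem_map_of_mem _ hG⟩, rfl⟩, ?_⟩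
    exact (Perm.subtypeCongr.left_apply_subtype h.1 h.2 x).symm
  · rintro ⟨-, ⟨⟨g, hg⟩, rfl⟩, rfl⟩
    obtain ⟨h, hG, rfl⟩ := Subgroup.mem_map.1 (map_fst ▸ hg)
    refine ⟨⟨_, map_glue ▸ Subgroup.mem_map_of_mem _ hG⟩, ?_⟩
    exact Perm.subtypeCongr.left_apply_subtype h.1 h.2 x

theorem orbit_gluePairs_eq_iff_isPretransitive
    (q : (Perm {x // p x} × Perm {x // p x}) × (Perm {x // ¬p x} × Perm {x // ¬p x}))
    (x : {x // p x}) :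
    orbit (cartographicGroup (gluePairs p q)) (x : α) = {y | p y} ↔
      IsPretransitive (cartographicGroup q.1) {x // p x} := by
  rw [orbit_cartographicGroup_gluePairs, isPretransitive_iff_orbit_eq_univ x,
    ← Subtype.val_injective.image_injective.eq_iff, Set.image_univ, Subtype.range_coe_subtype]

end PermutationPairs

section PairSums

variable {R : Type*} [CommSemiring R] (u v w : R)

/-- The weight `u ^ #vertices * v ^ #edges * w ^ #faces` of the hypermap with vertex rotation `q.1`
and edge rotation `q.2`. -/
def pairWeight {α : Type*} [Fintype α] [DecidableEq α] (q : Perm α × Perm α) : R :=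
  u ^ numCycles q.1 * v ^ numCycles q.2 * w ^ numCycles (q.1 * q.2)⁻¹

/-- The total weight of all, not necessarily transitive, pairs of permutations of `α`. -/
def pairSum (α : Type*) [Fintype α] [DecidableEq α] : R :=
  ∑ q : Perm α × Perm α, pairWeight u v w q

open Classical in
/-- The total weight of the transitive pairs of permutations of `α`: `hSum` with `Fin r` replaced
by an arbitrary finite type. -/
noncomputable def transitivePairSum (α : Type*) [Fintype α] [DecidableEq α] : R :=
  ∑ q : Perm α × Perm α with IsPretransitive (cartographicGroup q) α, pairWeight u v w q

theorem hSum_eq_transitivePairSum (r m n l : ℕ) :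
    hSum r m n l = transitivePairSum m n l (Fin r) := by
  simp only [hSum, transitivePairSum, pairWeight, cyc_eq_numCycles]
  congr! 2
  exact isTransitivePair_iff_isPretransitive

variable {α β : Type*} [Fintype α] [DecidableEq α] [Fintype β] [DecidableEq β]

theorem pairWeight_permCongr (e : α ≃ β) (q : Perm α × Perm α) :
    pairWeight u v w (e.permCongr q.1, e.permCongr q.2) = pairWeight u v w q := by
  have map_inv : (e.permCongr q.1 * e.permCongr q.2)⁻¹ = e.permCongr (q.1 * q.2)⁻¹ := by
    rw [← Equiv.permCongr_mul]
    rfl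
  simp only [pairWeight, map_inv, numCycles_permCongr]

theorem pairSum_congr (e : α ≃ β) : pairSum u v w α = pairSum u v w β :=
  Fintype.sum_equiv (e.permCongr.prodCongr e.permCongr) _ _ fun q =>
    (pairWeight_permCongr u v w e q).symm

theorem transitivePairSum_congr (e : α ≃ β) :
    transitivePairSum u v w α = transitivePairSum u v w β :=
  Finset.sum_equiv (e.permCongr.prodCongr e.permCongr)
    (fun q => by
      simp only [mem_filter_univ]
      exact (isPretransitive_cartographicGroup_permCongr e q).symm)
    fun q _ => (pairWeight_permCongr u v w e q).symm

theorem pairWeight_gluePairs (p : α → Prop) [DecidablePred p]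
    (q : (Perm {x // p x} × Perm {x // p x}) × (Perm {x // ¬p x} × Perm {x // ¬p x})) :
    pairWeight u v w (gluePairs p q) = pairWeight u v w q.1 * pairWeight u v w q.2 := by
  have glue_inv : ((gluePairs p q).1 * (gluePairs p q).2)⁻¹ =
      ((q.1.1 * q.1.2)⁻¹).subtypeCongr (q.2.1 * q.2.2)⁻¹ := by
    change (Perm.subtypeCongrHom p (q.1.1, q.2.1) * Perm.subtypeCongrHom p (q.1.2, q.2.2))⁻¹ = _
    rw [← map_mul, ← map_inv]
    rfl
  simp only [pairWeight, glue_inv, numCycles_subtypeCongr]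
  simp only [gluePairs, numCycles_subtypeCongr, pow_add]
  ring

open Classical in
theorem sum_pairWeight_orbit_eq {p : α → Prop} [DecidablePred p] {x : α} (hx : p x) :
    ∑ q : Perm α × Perm α with orbit (cartographicGroup q) x = {y | p y}, pairWeight u v w q =
      transitivePairSum u v w {y // p y} * pairSum u v w {y // ¬p y} := by
  rw [transitivePairSum, pairSum, Finset.sum_mul_sum, ← Finset.sum_product']
  symm
  refine Finset.sum_nbij (gluePairs p) (fun q hq => ?_) (gluePairs_injective p).injOn
    (fun q hq => ?_) fun q _ => (pairWeight_gluePairs u v w p q).symm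
  · have transitive := (mem_filter_univ _).1 (mem_product.1 hq).1
    exact (mem_filter_univ _).2 ((orbit_gluePairs_eq_iff_isPretransitive q ⟨x, hx⟩).2 transitive)
  · have orbit_eq := (mem_filter_univ _).1 hq
    obtain ⟨q, rfl⟩ := mem_range_gluePairs_of_orbit_eq orbit_eq
    have transitive := (orbit_gluePairs_eq_iff_isPretransitive q ⟨x, hx⟩).1 orbit_eq
    exact ⟨q, mem_product.2 ⟨(mem_filter_univ _).2 transitive, mem_univ _⟩, rfl⟩

theorem pairSum_eq_sum_transitivePairSum_mul_pairSum (x : α) :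
    pairSum u v w α = ∑ S : Finset α with x ∈ S,
      transitivePairSum u v w {y // y ∈ S} * pairSum u v w {y // y ∉ S} := by
  classical
  have mapsTo (q : Perm α × Perm α) : (orbit (cartographicGroup q) x).toFinset ∈
      ({S | x ∈ S} : Finset (Finset α)) := by simp [mem_orbit_self]
  rw [pairSum, ← Finset.sum_fiberwise_of_maps_to fun q _ => mapsTo q]
  refine Finset.sum_congr rfl fun S hS => ?_
  convert sum_pairWeight_orbit_eq u v w (p := (· ∈ S)) ((mem_filter_univ S).1 hS) using 3 with q
  rw [← Finset.coe_inj, Set.coe_toFinset]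
  rfl

theorem natCast_mul_pairSum (r : ℕ) :
    r * pairSum u v w (Fin r) = ∑ k ∈ range r,
      r.choose k * ((r - k : ℕ) *
        (transitivePairSum u v w (Fin (r - k)) * pairSum u v w (Fin k))) := by
  have relabel (S : Finset (Fin r)) :
      transitivePairSum u v w {y // y ∈ S} * pairSum u v w {y // y ∉ S} =
        transitivePairSum u v w (Fin #S) * pairSum u v w (Fin (r - #S)) := by
    rw [transitivePairSum_congr u v w S.equivFin, pairSum_congr u v w
      (Fintype.equivFinOfCardEq (α := {y // y ∉ S}) (n := r - #S) (by simp))]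
  calc r * pairSum u v w (Fin r)
      = ∑ x : Fin r, ∑ S with x ∈ S,
          transitivePairSum u v w (Fin #S) * pairSum u v w (Fin (r - #S)) := by
        simp only [← relabel, ← pairSum_eq_sum_transitivePairSum_mul_pairSum, sum_const, card_univ,
          Fintype.card_fin, nsmul_eq_mul]
    _ = ∑ S : Finset (Fin r),
          #S * (transitivePairSum u v w (Fin #S) * pairSum u v w (Fin (r - #S))) := by
        rw [Finset.sum_comm' (t' := univ) (s' := id) (by simp)]
        simp only [id, sum_const, nsmul_eq_mul]
    _ = ∑ k ∈ range (r + 1),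
          r.choose k * (k * (transitivePairSum u v w (Fin k) * pairSum u v w (Fin (r - k)))) := by
        rw [← Finset.powerset_univ, Finset.sum_powerset_apply_card
          (fun k => (k : R) * (transitivePairSum u v w (Fin k) * pairSum u v w (Fin (r - k))))]
        simp only [card_univ, Fintype.card_fin, nsmul_eq_mul]
    _ = _ := by
        rw [← Finset.sum_flip, Finset.sum_range_succ, Nat.sub_self, Nat.cast_zero, zero_mul,
          mul_zero, add_zero]
        refine Finset.sum_congr rfl fun k hk => ?_
        have hk : k ≤ r := (mem_range.1 hk).le
        rw [Nat.choose_symm hk, Nat.sub_sub_self hk]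

theorem pairSum_one_one (m : ℕ) :
    pairSum 1 1 m α = (Fintype.card α).factorial * m.ascFactorial (Fintype.card α) := by
  have sum_third_cycles (σ : Perm α) :
      ∑ τ, pairWeight 1 1 m (σ, τ) = m.ascFactorial (Fintype.card α) := by
    simp only [pairWeight, one_pow, one_mul, ← sum_pow_numCycles]
    exact Fintype.sum_equiv ((Equiv.mulLeft σ).trans (Equiv.inv _)) _ _ fun _ => rfl
  simp only [pairSum, Fintype.sum_prod_type, sum_third_cycles, sum_const, card_univ,
    Fintype.card_perm, smul_eq_mul]

end PairSums

theorem Hpoly_eq_mul_div_factorial {r : ℕ} (hr : r ≠ 0) (m n l : ℕ) :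
    Hpoly r m n l = r * hSum r m n l / r.factorial := by
  rw [Hpoly, ← Nat.mul_factorial_pred hr, Nat.cast_mul,
    mul_div_mul_left _ _ (Nat.cast_ne_zero.2 hr)]

theorem mul_pairSum_div_factorial (r m n l : ℕ) :
    (r : ℚ) * ((pairSum m n l (Fin r) : ℕ) / r.factorial) =
      ∑ k ∈ range r, (pairSum m n l (Fin k) : ℕ) / k.factorial * Hpoly (r - k) m n l := by
  have double_count : (r : ℚ) * (pairSum m n l (Fin r) : ℕ) = ∑ k ∈ range r, (r.choose k : ℚ) *
      ((r - k : ℕ) * (hSum (r - k) m n l * (pairSum m n l (Fin k) : ℕ))) := by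
    simp only [hSum_eq_transitivePairSum]
    exact_mod_cast natCast_mul_pairSum m n l r
  have normalise {k : ℕ} (hk : k < r) :
      (r.choose k : ℚ) * ((r - k : ℕ) * (hSum (r - k) m n l * (pairSum m n l (Fin k) : ℕ))) =
        r.factorial * ((pairSum m n l (Fin k) : ℕ) / k.factorial * Hpoly (r - k) m n l) := by
    rw [Nat.cast_choose ℚ hk.le, Hpoly_eq_mul_div_factorial (Nat.sub_ne_zero_of_lt hk)]
    ring
  rw [← mul_div_assoc, div_eq_iff (Nat.cast_ne_zero.2 r.factorial_ne_zero), double_count, mul_comm,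
    Finset.mul_sum]
  exact Finset.sum_congr rfl fun k hk => normalise (mem_range.1 hk)

/-- Recursion for the one-variable specialisation `H_r(1,1,m)`:
`H_r(1,1,m) = r·m^{(r)} - Σ_{k=1}^{r-1} m^{(k)} H_{r-k}(1,1,m)`. -/
theorem Hpoly_one_one_recursion (m : ℕ) (hm : 0 < m) (r : ℕ) (hr : 1 ≤ r) :
    Hpoly r 1 1 m =
      (r : ℚ) * (Nat.ascFactorial m r) -
        ∑ k ∈ Finset.Icc 1 (r - 1), (Nat.ascFactorial m k : ℚ) * Hpoly (r - k) 1 1 m := by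
  have pairSum_div (k : ℕ) :
      ((pairSum 1 1 m (Fin k) : ℕ) : ℚ) / k.factorial = m.ascFactorial k := by
    rw [pairSum_one_one, Fintype.card_fin, Nat.cast_mul,
      mul_div_cancel_left₀ _ (Nat.cast_ne_zero.2 k.factorial_ne_zero)]
  have convolution := mul_pairSum_div_factorial r 1 1 m
  simp only [pairSum_div] at convolution
  have not_isMin : ¬IsMin r := not_isMin_of_lt hr
  rw [convolution, Finset.range_eq_Ico, Finset.sum_eq_sum_Ico_succ_bot hr, Nat.ascFactorial_zero,
    Nat.cast_one, one_mul, Nat.sub_zero, zero_add,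
    Finset.Icc_sub_one_right_eq_Ico_of_not_isMin not_isMin, add_sub_cancel_right]
end
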